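/- arXiv:1410.7339 — 4 statements merged into one kernel-verified Lean document; each statement's English description precedes it below -/
import Mathlib

section
/- Let n, m ≥ 1 be integers, γ ∈ (0,1), d ≥ 0 an integer, and let ψ : ℝⁿ → ℝᵐ be a polynomial map of degree at most d that is not identically zero. Then there exist ε > 0 and C ∈ (0,∞), depending only on n, m, γ and ψ, with the following property: whenever u, v : B₁(0) → ℝᵐ are d-times continuously differentiable functions with ‖u − ψ‖_{C^d(B₁(0))} + ‖v − ψ‖_{C^d(B₁(0))} < ε, one has ∫_{B_γ(0)} |u − v|² ≤ C ∫_{B₁(0)} min(|u − v|, |u + v|)². -/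
open Metric MeasureTheory

noncomputable section

/-- The `C^d(B₁(0))` norm `Σ_{j=0}^d sup_{B₁(0)} |D^j w|`. -/
def CdNorm (n m d : ℕ) (w : EuclideanSpace ℝ (Fin n) → EuclideanSpace ℝ (Fin m)) : ℝ :=
  ∑ j ∈ Finset.range (d + 1),
    ⨆ x ∈ ball (0 : EuclideanSpace ℝ (Fin n)) 1,
      ‖iteratedFDerivWithin ℝ j w (ball 0 1) x‖

end


lemma aux_nodes (k : ℕ) (v : Fin (2*k+1) → ℝ) (hv : Function.Injective v) :
    ∃ c : ℝ, 0 < c ∧ ∀ P Q : Polynomial ℝ, P.natDegree ≤ k → Q.natDegree ≤ k →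
      ∃ j : Fin (2*k+1), c * |P.coeff 0| ≤ |P.eval (v j)| ∧ c * |Q.coeff k| ≤ |Q.eval (v j)| := by
  classical
  set M : ℝ := ∑ s : Finset (Fin (2*k+1)), ∑ j ∈ s,
    (|(Lagrange.basis s v j).coeff 0| + |(Lagrange.basis s v j).coeff k|) with hM
  have hM0 : 0 ≤ M := by positivity
  refine ⟨1 / (M + 1), by positivity, fun P Q hP hQ => ?_⟩
  set c := 1 / (M + 1) with hc
  have hcpos : 0 < c := by positivity
  have hcM : c * M < 1 := by
    rw [hc, div_mul_eq_mul_div, div_lt_one (by positivity)]; linarith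
  have key : ∀ (R : Polynomial ℝ) (i : ℕ), R.natDegree ≤ k → (i = 0 ∨ i = k) →
      (Finset.univ.filter (fun j => |R.eval (v j)| < c * |R.coeff i|)).card ≤ k := by
    intro R i hR hi
    by_contra hcon
    push Not at hcon
    obtain ⟨s, hs, hcard⟩ := Finset.exists_subset_card_eq (Nat.succ_le_of_lt hcon)
    have hbad : ∀ j ∈ s, |R.eval (v j)| < c * |R.coeff i| := fun j hj => by
      simpa using hs hj
    have hsne : s.Nonempty := by
      rw [← Finset.card_pos, hcard]; omega
    obtain ⟨j0, hj0⟩ := hsne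
    have hpos : 0 < |R.coeff i| := by
      have := (abs_nonneg _).trans_lt (hbad j0 hj0)
      by_contra h0
      have : |R.coeff i| = 0 := le_antisymm (not_lt.mp h0) (abs_nonneg _)
      have h3 := hbad j0 hj0
      rw [this, mul_zero] at h3
      exact absurd h3 (not_lt.mpr (abs_nonneg _))
    have hdeg : R.degree < s.card := by
      rw [hcard]
      refine lt_of_le_of_lt (Polynomial.degree_le_of_natDegree_le hR) ?_
      exact_mod_cast Nat.lt_succ_self k
    have heq := Lagrange.eq_interpolate (s := s) (v := v) hv.injOn hdeg
    have hco : R.coeff i = ∑ j ∈ s, R.eval (v j) * (Lagrange.basis s v j).coeff i := by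
      conv_lhs => rw [heq]
      rw [Lagrange.interpolate_apply, Polynomial.finsetSum_coeff]
      simp
    have h1 : |R.coeff i| ≤ ∑ j ∈ s, (c * |R.coeff i|) * |(Lagrange.basis s v j).coeff i| := by
      calc |R.coeff i| = |∑ j ∈ s, R.eval (v j) * (Lagrange.basis s v j).coeff i| := by rw [← hco]
        _ ≤ ∑ j ∈ s, |R.eval (v j) * (Lagrange.basis s v j).coeff i| := Finset.abs_sum_le_sum_abs _ _
        _ ≤ _ := by
          apply Finset.sum_le_sum
          intro j hj
          rw [abs_mul]
          exact mul_le_mul_of_nonneg_right (hbad j hj).le (abs_nonneg _)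
    have h2 : ∑ j ∈ s, |(Lagrange.basis s v j).coeff i| ≤ M := by
      calc ∑ j ∈ s, |(Lagrange.basis s v j).coeff i| ≤ ∑ j ∈ s,
            (|(Lagrange.basis s v j).coeff 0| + |(Lagrange.basis s v j).coeff k|) := by
            apply Finset.sum_le_sum
            intro j _
            rcases hi with rfl | rfl
            · linarith [abs_nonneg ((Lagrange.basis s v j).coeff k)]
            · linarith [abs_nonneg ((Lagrange.basis s v j).coeff 0)]
        _ ≤ M := Finset.single_le_sum (f := fun s : Finset (Fin (2*k+1)) => ∑ j ∈ s,
    (|(Lagrange.basis s v j).coeff 0| + |(Lagrange.basis s v j).coeff k|)) (fun _ _ => by positivity) (Finset.mem_univ s)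
    rw [← Finset.mul_sum] at h1
    have h3 : (c * |R.coeff i|) * ∑ j ∈ s, |(Lagrange.basis s v j).coeff i| ≤ c * |R.coeff i| * M :=
      mul_le_mul_of_nonneg_left h2 (by positivity)
    nlinarith
  by_contra hcon
  push Not at hcon
  have hcov : (Finset.univ : Finset (Fin (2*k+1))) ⊆
      (Finset.univ.filter (fun j => |P.eval (v j)| < c * |P.coeff 0|)) ∪
      (Finset.univ.filter (fun j => |Q.eval (v j)| < c * |Q.coeff k|)) := by
    intro j _
    by_cases h : c * |P.coeff 0| ≤ |P.eval (v j)|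
    · simp [hcon j h]
    · simp [not_le.mp h]
  have := (Finset.card_le_card hcov).trans (Finset.card_union_le _ _)
  have h1 := key P 0 hP (Or.inl rfl)
  have h2 := key Q k hQ (Or.inr rfl)
  simp at this
  omega

lemma aux_line {n : ℕ} (p : MvPolynomial (Fin n) ℝ) (k : ℕ) (hp : p.totalDegree ≤ k)
    (y z : Fin n → ℝ) :
    ∃ Q : Polynomial ℝ, Q.natDegree ≤ k ∧
      Q.coeff k = MvPolynomial.eval z (MvPolynomial.homogeneousComponent k p) ∧
      ∀ t : ℝ, Q.eval t = MvPolynomial.eval (fun i => y i + t * z i) p := by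
  classical
  set L : Fin n → Polynomial ℝ := fun i => Polynomial.C (y i) + Polynomial.X * Polynomial.C (z i)
    with hL
  have hLd : ∀ i, (L i).natDegree ≤ 1 := fun i => by
    simp only [hL]; compute_degree
  have hLc : ∀ i, (L i).coeff 1 = z i := fun i => by simp [hL]
  have hmd : ∀ s : Fin n →₀ ℕ, (∏ i, L i ^ s i).natDegree ≤ s.degree := fun s => by
    refine (Polynomial.natDegree_prod_le _ _).trans ?_
    rw [Finsupp.degree_eq_sum]
    apply Finset.sum_le_sum
    intro i _
    simpa using Polynomial.natDegree_pow_le_of_le (s i) (hLd i)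
  have hmc : ∀ s : Fin n →₀ ℕ, (∏ i, L i ^ s i).coeff s.degree = ∏ i, z i ^ s i := fun s => by
    have aux : ∀ S : Finset (Fin n), (∏ i ∈ S, L i ^ s i).natDegree ≤ ∑ i ∈ S, s i ∧
      (∏ i ∈ S, L i ^ s i).coeff (∑ i ∈ S, s i) = ∏ i ∈ S, z i ^ s i := by
      intro S
      induction S using Finset.induction_on with
      | empty => simp
      | insert a S ha ih =>
        have h1 : (L a ^ s a).natDegree ≤ s a := by
          simpa using Polynomial.natDegree_pow_le_of_le (s a) (hLd a)
        rw [Finset.prod_insert ha, Finset.sum_insert ha, Finset.prod_insert ha]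
        refine ⟨Polynomial.natDegree_mul_le_of_le h1 ih.1, ?_⟩
        rw [Polynomial.coeff_mul_add_eq_of_natDegree_le h1 ih.1, ih.2]
        congr 1
        have := Polynomial.coeff_pow_of_natDegree_le (m := s a) (hLd a)
        rw [hLc] at this
        simpa using this
    rw [Finsupp.degree_eq_sum]
    exact (aux Finset.univ).2
  refine ⟨∑ s ∈ p.support, Polynomial.C (p.coeff s) * ∏ i, L i ^ s i, ?_, ?_, ?_⟩
  · apply Polynomial.natDegree_sum_le_of_forall_le
    intro s hs
    refine (Polynomial.natDegree_C_mul_le _ _).trans ((hmd s).trans ?_)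
    have := MvPolynomial.le_totalDegree hs
    rw [Finsupp.degree]
    exact this.trans hp
  · rw [Polynomial.finsetSum_coeff, MvPolynomial.homogeneousComponent_apply, map_sum,
      Finset.sum_filter]
    apply Finset.sum_congr rfl
    intro s hs
    rw [Polynomial.coeff_C_mul]
    split_ifs with h
    · rw [← h, hmc, MvPolynomial.eval_monomial, Finsupp.prod_fintype _ _ (by simp)]
    · have hle : s.degree ≤ k := by
        have := MvPolynomial.le_totalDegree hs
        rw [Finsupp.degree]
        exact this.trans hp
      rw [Polynomial.coeff_eq_zero_of_natDegree_lt, mul_zero]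
      exact (hmd s).trans_lt (lt_of_le_of_ne hle h)
  · intro t
    rw [MvPolynomial.eval_eq', Polynomial.eval_finsetSum]
    apply Finset.sum_congr rfl
    intro s _
    simp only [hL, Polynomial.eval_mul, Polynomial.eval_C, Polynomial.eval_prod,
      Polynomial.eval_pow, Polynomial.eval_add, Polynomial.eval_X]

lemma aux_homog {n : ℕ} (p : MvPolynomial (Fin n) ℝ) (k : ℕ) (hp : p.IsHomogeneous k)
    (r : ℝ) (z : Fin n → ℝ) :
    MvPolynomial.eval (fun i => r * z i) p = r ^ k * MvPolynomial.eval z p := by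
  rw [MvPolynomial.eval_eq', MvPolynomial.eval_eq', Finset.mul_sum]
  apply Finset.sum_congr rfl
  intro s hs
  have : ∑ i, s i = k := by
    have := hp (MvPolynomial.mem_support_iff.mp hs)
    rw [← this, Finsupp.weight_apply, Finsupp.sum_fintype _ _ (by simp)]
    simp
  simp_rw [mul_pow, Finset.prod_mul_distrib, Finset.prod_pow_eq_pow_sum, this]
  ring
open scoped Pointwise in
lemma aux_taylor {E : Type*} [NormedAddCommGroup E] [NormedSpace ℝ E] (k : ℕ) (hk : 1 ≤ k)
    (B : Set E) (hB : IsOpen B) (a : E → ℝ) (ha : ContDiffOn ℝ k a B) (ε : ℝ)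
    (hε : ∀ x ∈ B, ‖iteratedFDerivWithin ℝ k a B x‖ ≤ ε) (y w : E)
    (hseg : ∀ t ∈ Set.Icc (0:ℝ) 1, y + t • w ∈ B) :
    ∃ P : Polynomial ℝ, P.natDegree < k ∧ P.coeff 0 = a y ∧
      ∀ t ∈ Set.Icc (0:ℝ) 1, |a (y + t • w) - P.eval t| ≤ ε * ‖w‖ ^ k := by
  obtain ⟨l, rfl⟩ : ∃ l, k = l + 1 := ⟨k - 1, by omega⟩
  have hε0 : 0 ≤ ε := (norm_nonneg _).trans (hε _ (hseg 0 (by simp)))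
  set h : ℝ → ℝ := fun t => a (y + t • w) with hh
  set g : ℝ →L[ℝ] E := (ContinuousLinearMap.id ℝ ℝ).smulRight w with hg
  have hgn : ‖g‖ ≤ ‖w‖ := by
    rw [hg, ContinuousLinearMap.norm_smulRight_apply]
    exact mul_le_of_le_one_left (norm_nonneg _) ContinuousLinearMap.norm_id_le
  set B' : Set E := (fun x => y + x) ⁻¹' B with hB'
  have hB'o : IsOpen B' := hB.preimage (by fun_prop)
  have hBB : y +ᵥ B' = B := by
    ext x
    simp [hB', Set.mem_vadd_set_iff_neg_vadd_mem]
  set a' : E → ℝ := fun x => a (y + x) with ha'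
  have ha'c : ContDiffOn ℝ ((l+1 : ℕ)) a' B' :=
    ha.comp (g := a) (f := fun x => y + x) (by fun_prop) (fun x hx => hx)
  set S : Set ℝ := g ⁻¹' B' with hS
  have hSo : IsOpen S := hB'o.preimage g.continuous
  have hhg : h = a' ∘ g := by
    ext t; simp [hh, ha', hg]
  have hIS : Set.Icc (0:ℝ) 1 ⊆ S := fun t ht => by
    simpa [hS, hB', hg] using hseg t ht
  have hhc : ContDiffOn ℝ ((l+1 : ℕ)) h S := by
    rw [hhg]; exact ha'c.comp_continuousLinearMap g
  have hbd : ∀ t ∈ Set.Icc (0:ℝ) 1,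
      ‖iteratedDerivWithin (l+1) h (Set.Icc 0 1) t‖ ≤ ε * ‖w‖ ^ (l+1) := by
    intro t ht
    rw [iteratedDerivWithin_eq_iteratedDeriv (uniqueDiffOn_Icc one_pos)
      (hhc.contDiffAt (hSo.mem_nhds (hIS ht))) ht,
      ← norm_iteratedFDeriv_eq_norm_iteratedDeriv,
      ← iteratedFDerivWithin_of_isOpen _ hSo (hIS ht), hhg,
      g.iteratedFDerivWithin_comp_right ha'c hB'o.uniqueDiffOn hSo.uniqueDiffOn (hIS ht) le_rfl]
    refine (ContinuousMultilinearMap.norm_compContinuousLinearMap_le _ _).trans ?_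
    rw [Finset.prod_const, Finset.card_univ, Fintype.card_fin, ha', iteratedFDerivWithin_comp_add_left,
      hBB]
    gcongr
    exact hε _ (hIS ht)
  refine ⟨∑ j ∈ Finset.range (l + 1), Polynomial.C ((j.factorial : ℝ)⁻¹ *
    iteratedDerivWithin j h (Set.Icc 0 1) 0) * Polynomial.X ^ j, ?_, ?_, ?_⟩
  · refine Nat.lt_succ_of_le ?_
    apply Polynomial.natDegree_sum_le_of_forall_le
    intro j hj
    refine (Polynomial.natDegree_C_mul_X_pow_le _ _).trans ?_
    simp at hj; omega
  · rw [Polynomial.finsetSum_coeff]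
    simp [Polynomial.coeff_X_pow, hh]
  · intro t ht
    have := taylor_mean_remainder_bound (f := h) (n := l) zero_le_one
      (by exact_mod_cast hhc.mono hIS) ht hbd
    rw [taylor_within_apply] at this
    rw [Polynomial.eval_finsetSum]
    rw [Real.norm_eq_abs] at this
    have e : ∑ j ∈ Finset.range (l + 1), ((j.factorial : ℝ)⁻¹ * (t - 0) ^ j) •
        iteratedDerivWithin j h (Set.Icc 0 1) 0 = ∑ j ∈ Finset.range (l + 1),
        Polynomial.eval t (Polynomial.C ((j.factorial : ℝ)⁻¹ *
        iteratedDerivWithin j h (Set.Icc 0 1) 0) * Polynomial.X ^ j) := by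
      apply Finset.sum_congr rfl
      intro j _
      simp
      ring
    rw [e] at this
    refine this.trans ?_
    have hA : 0 ≤ ε * ‖w‖ ^ (l+1) := by positivity
    have h1 : (t - 0) ^ (l+1) ≤ 1 := by
      rw [sub_zero]; exact pow_le_one₀ ht.1 ht.2
    have h2 : (1:ℝ) ≤ l.factorial := by exact_mod_cast Nat.one_le_iff_ne_zero.mpr (Nat.factorial_ne_zero l)
    rw [div_le_iff₀ (by linarith)]
    exact (mul_le_of_le_one_right hA h1).trans (le_mul_of_one_le_right hA h2)
lemma aux_local (n k : ℕ) (hk : 1 ≤ k) (p : MvPolynomial (Fin n) ℝ) (hp : p.totalDegree = k)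
    (hp0 : p ≠ 0) :
    ∃ ε0 : ℝ, 0 < ε0 ∧ ∃ c1 : ℝ, 0 < c1 ∧ ∃ κ : ℝ, 0 < κ ∧
      ∀ a e : EuclideanSpace ℝ (Fin n) → ℝ, ContDiffOn ℝ k a (ball 0 1) →
        ContDiffOn ℝ k e (ball 0 1) →
        (∀ x ∈ ball (0 : EuclideanSpace ℝ (Fin n)) 1,
          ‖iteratedFDerivWithin ℝ k a (ball 0 1) x‖ ≤ ε0) →
        (∀ x ∈ ball (0 : EuclideanSpace ℝ (Fin n)) 1,
          ‖iteratedFDerivWithin ℝ k e (ball 0 1) x‖ ≤ ε0) →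
        ∀ (y : EuclideanSpace ℝ (Fin n)) (r : ℝ), 0 < r → closedBall y r ⊆ ball 0 1 →
          |a y| = r ^ k →
          ENNReal.ofReal (κ * r ^ n) ≤ volume {x | x ∈ closedBall y r ∧ c1 * r ^ k ≤ |a x| ∧
            c1 * r ^ k ≤ |2 * MvPolynomial.eval (fun i => x i) p + e x|} := by
  classical
  set q := MvPolynomial.homogeneousComponent k p with hq
  have hqh : q.IsHomogeneous k := MvPolynomial.homogeneousComponent_isHomogeneous k p
  have hq0 : q ≠ 0 := by
    intro h0
    obtain ⟨s, hs, hsd⟩ := Finset.exists_mem_eq_sup p.support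
      (MvPolynomial.support_nonempty.mpr hp0) (fun s => s.sum fun _ e => e)
    have h1 : s.degree = k := by
      rw [← hp, MvPolynomial.totalDegree, hsd]; rfl
    have h2 := MvPolynomial.coeff_homogeneousComponent k p s
    rw [if_pos h1, ← hq, h0] at h2
    exact MvPolynomial.mem_support_iff.mp hs (by simpa using h2.symm)
  obtain ⟨z, hz⟩ : ∃ z : Fin n → ℝ, MvPolynomial.eval z q ≠ 0 := by
    by_contra hcon
    push Not at hcon
    exact hq0 (MvPolynomial.funext (by simpa using hcon))
  set ev : EuclideanSpace ℝ (Fin n) → ℝ := fun x => MvPolynomial.eval (fun i => x i) q with hev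
  have hevc : Continuous ev := by
    have h1 : Continuous (fun x : EuclideanSpace ℝ (Fin n) => fun i => x i) := by fun_prop
    exact (MvPolynomial.continuous_eval q).comp h1
  obtain ⟨z0, hz0, hz0'⟩ : ∃ z0 ∈ ball (0 : EuclideanSpace ℝ (Fin n)) 1, ev z0 ≠ 0 := by
    set Z : EuclideanSpace ℝ (Fin n) := WithLp.toLp 2 z with hZ
    have hpos : 0 < ‖Z‖ + 1 := by positivity
    refine ⟨(‖Z‖ + 1)⁻¹ • Z, ?_, ?_⟩
    · rw [mem_ball_zero_iff, norm_smul, norm_inv, Real.norm_of_nonneg hpos.le,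
        inv_mul_lt_iff₀ hpos]
      linarith
    · have : ev ((‖Z‖ + 1)⁻¹ • Z) = ((‖Z‖ + 1)⁻¹) ^ k * MvPolynomial.eval z q :=
        aux_homog q k hqh _ z
      rw [this]
      exact mul_ne_zero (by positivity) hz
  set η := |ev z0| / 2 with hη
  have hηpos : 0 < η := by have := abs_pos.mpr hz0'; positivity
  set U : Set (EuclideanSpace ℝ (Fin n)) := ball 0 1 ∩ {x | η < |ev x|} with hU
  have hUo : IsOpen U := isOpen_ball.inter (isOpen_lt continuous_const hevc.abs)
  have hUne : U.Nonempty := ⟨z0, hz0, by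
    simp only [Set.mem_ofPred_eq, hη]; have := abs_pos.mpr hz0'; linarith⟩
  have hUpos : 0 < volume U := hUo.measure_pos volume hUne
  have hUfin : volume U ≠ ⊤ :=
    ((measure_mono Set.inter_subset_left).trans_lt measure_ball_lt_top).ne
  set N : ℝ := 2 * k + 1 with hN
  have hNpos : 0 < N := by positivity
  set τ : Fin (2 * k + 1) → ℝ := fun j => ((j : ℕ) + 1 : ℝ) / N with hτ
  have hτinj : Function.Injective τ := by
    intro i j hij
    simp only [hτ] at hij
    rw [div_left_inj' hNpos.ne'] at hij
    have : ((i : ℕ) : ℝ) = (j : ℕ) := by linarith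
    exact Fin.ext (by exact_mod_cast this)
  have hτ1 : ∀ j, 1 / N ≤ τ j := fun j => by
    simp only [hτ]
    gcongr
    have : (0 : ℝ) ≤ (j : ℕ) := by positivity
    linarith
  have hτ2 : ∀ j, τ j ≤ 1 := fun j => by
    simp only [hτ]
    rw [div_le_one hNpos, hN]
    exact_mod_cast j.2
  have hτ0 : ∀ j, 0 < τ j := fun j => lt_of_lt_of_le (by positivity) (hτ1 j)
  obtain ⟨c, hc, hnodes⟩ := aux_nodes k τ hτinj
  set c1 := min (c / 2) (c * η) with hc1
  have hc1pos : 0 < c1 := by positivity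
  refine ⟨c1, hc1pos, c1, hc1pos, (volume U).toReal / (N * N ^ n), ?_, ?_⟩
  · have := ENNReal.toReal_pos hUpos.ne' hUfin
    positivity
  intro a e ha he hab heb y r hr hyr hay
  set L := {x | x ∈ closedBall y r ∧ c1 * r ^ k ≤ |a x| ∧
            c1 * r ^ k ≤ |2 * MvPolynomial.eval (fun i => x i) p + e x|} with hL
  have hmain : ∀ w ∈ U, ∃ j, y + (τ j * r) • w ∈ L := by
    intro w hw
    have hwn : ‖w‖ < 1 := by simpa using hw.1
    have hwr : ‖r • w‖ ≤ r := by
      rw [norm_smul, Real.norm_of_nonneg hr.le]; nlinarith [norm_nonneg w]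
    have hseg' : ∀ t ∈ Set.Icc (0:ℝ) 1, y + t • (r • w) ∈ closedBall y r := fun t ht => by
      rw [mem_closedBall, dist_eq_norm, add_sub_cancel_left, norm_smul, Real.norm_of_nonneg ht.1]
      nlinarith [norm_nonneg (r • w), ht.1, ht.2]
    have hseg := fun t ht => hyr (hseg' t ht)
    obtain ⟨P, hPd, hP0, hPt⟩ := aux_taylor k hk _ isOpen_ball a ha c1 hab y (r • w) hseg
    obtain ⟨R, hRd, hR0, hRt⟩ := aux_taylor k hk _ isOpen_ball e he c1 heb y (r • w) hseg
    obtain ⟨Q, hQd, hQk, hQt⟩ := aux_line p k hp.le (fun i => y i) (fun i => r * w i)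
    rw [← hq, aux_homog q k hqh] at hQk
    have hT : (Polynomial.C 2 * Q + R).natDegree ≤ k := by
      refine Polynomial.natDegree_add_le_of_degree_le ?_ hRd.le
      exact (Polynomial.natDegree_C_mul_le _ _).trans hQd
    obtain ⟨j, hj1, hj2⟩ := hnodes P (Polynomial.C 2 * Q + R) hPd.le hT
    have htj : τ j ∈ Set.Icc (0:ℝ) 1 := ⟨(hτ0 j).le, hτ2 j⟩
    have hrk : ‖r • w‖ ^ k ≤ r ^ k := by gcongr
    have hcr : c1 * ‖r • w‖ ^ k ≤ c1 * r ^ k := by gcongr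
    have hrkpos : 0 < r ^ k := by positivity
    have hm1 : c1 * r ^ k ≤ c / 2 * r ^ k := by gcongr; exact min_le_left _ _
    have hm2 : c1 * r ^ k ≤ c * η * r ^ k := by gcongr; exact min_le_right _ _
    refine ⟨j, ?_⟩
    rw [mul_smul]
    have h1 := (hPt _ htj).trans hcr
    have h2 := (hRt _ htj).trans hcr
    refine ⟨hseg' _ htj, ?_, ?_⟩
    · rw [hP0, hay] at hj1
      have h3 := abs_sub_abs_le_abs_sub (P.eval (τ j)) (a (y + τ j • r • w))
      rw [abs_sub_comm] at h3
      linarith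
    · rw [Polynomial.coeff_add, Polynomial.coeff_C_mul, hQk,
        Polynomial.coeff_eq_zero_of_natDegree_lt hRd, add_zero, abs_mul, abs_mul,
        abs_of_pos hrkpos, abs_two] at hj2
      have hw2 : η < |ev w| := hw.2
      have h4 : c * (2 * (r ^ k * η)) ≤ c * (2 * (r ^ k * |ev w|)) := by gcongr
      have h5 : c * (2 * (r ^ k * |ev w|)) ≤ _ := hj2
      rw [Polynomial.eval_add, Polynomial.eval_mul, Polynomial.eval_C, hQt] at h5
      have h6 : MvPolynomial.eval (fun i => (y + τ j • r • w) i) p =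
        MvPolynomial.eval (fun i => y i + τ j * (r * w i)) p := by
        simp
      rw [h6]
      set X := MvPolynomial.eval (fun i => y i + τ j * (r * w i)) p
      have h3 := abs_sub_abs_le_abs_sub (2 * X + R.eval (τ j)) (2 * X + e (y + τ j • r • w))
      rw [add_sub_add_left_eq_sub, abs_sub_comm (R.eval (τ j))] at h3
      linarith
  -- measure
  have hcov : U ⊆ ⋃ j, (fun w => (τ j * r) • w) ⁻¹' ((fun x => y + x) ⁻¹' L) := by
    intro w hw
    obtain ⟨j, hj⟩ := hmain w hw
    exact Set.mem_iUnion.mpr ⟨j, hj⟩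
  have hvol : volume U ≤ ENNReal.ofReal (N * (N / r) ^ n) * volume L := by
    calc volume U ≤ ∑ j, volume ((fun w => (τ j * r) • w) ⁻¹' ((fun x => y + x) ⁻¹' L)) :=
          (measure_mono hcov).trans (measure_iUnion_fintype_le _ _)
      _ ≤ ∑ j : Fin (2 * k + 1), ENNReal.ofReal ((N / r) ^ n) * volume L := by
          apply Finset.sum_le_sum
          intro j _
          have hpos : 0 < τ j * r := mul_pos (hτ0 j) hr
          rw [Measure.addHaar_preimage_smul volume hpos.ne', measure_preimage_add,
            finrank_euclideanSpace_fin, abs_of_pos (by positivity), ← inv_pow]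
          gcongr
          rw [inv_le_comm₀ hpos (by positivity), inv_div, div_eq_mul_one_div, mul_comm]
          gcongr
          exact hτ1 j
      _ = ENNReal.ofReal (N * (N / r) ^ n) * volume L := by
          rw [Finset.sum_const, Finset.card_univ, Fintype.card_fin, nsmul_eq_mul, ← mul_assoc,
            ENNReal.ofReal_mul hNpos.le]
          congr 2
          rw [hN]
          norm_cast
  have hLfin : volume L ≠ ⊤ :=
    ((measure_mono (fun x hx => hx.1)).trans_lt (measure_closedBall_lt_top (x := y) (r := r))).ne
  rw [ENNReal.ofReal_le_iff_le_toReal hLfin]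
  have h7 := ENNReal.toReal_mono (ENNReal.mul_ne_top ENNReal.ofReal_ne_top hLfin) hvol
  rw [ENNReal.toReal_mul, ENNReal.toReal_ofReal (by positivity)] at h7
  rw [div_mul_eq_mul_div, div_le_iff₀ (by positivity)]
  calc (volume U).toReal * r ^ n ≤ (N * (N / r) ^ n * (volume L).toReal) * r ^ n := by gcongr
    _ = _ := by
      rw [div_pow]; field_simp

lemma aux_core (n k : ℕ) (hk : 1 ≤ k) (p : MvPolynomial (Fin n) ℝ) (hp : p.totalDegree = k)
    (hp0 : p ≠ 0) (γ : ℝ) (hγ : γ ∈ Set.Ioo (0 : ℝ) 1) :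
    ∃ ε0 : ℝ, 0 < ε0 ∧ ∃ C : ℝ, 0 < C ∧
      ∀ (a e H : EuclideanSpace ℝ (Fin n) → ℝ), ContDiffOn ℝ k a (ball 0 1) →
        ContDiffOn ℝ k e (ball 0 1) →
        (∀ x ∈ ball (0 : EuclideanSpace ℝ (Fin n)) 1, |a x| ≤ ε0) →
        (∀ x ∈ ball (0 : EuclideanSpace ℝ (Fin n)) 1,
          ‖iteratedFDerivWithin ℝ k a (ball 0 1) x‖ ≤ ε0) →
        (∀ x ∈ ball (0 : EuclideanSpace ℝ (Fin n)) 1,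
          ‖iteratedFDerivWithin ℝ k e (ball 0 1) x‖ ≤ ε0) →
        AEMeasurable H (volume.restrict (ball 0 1)) →
        (∀ x ∈ ball (0 : EuclideanSpace ℝ (Fin n)) 1,
          min |a x| |2 * MvPolynomial.eval (fun i => x i) p + e x| ≤ H x) →
        ∫⁻ x in ball (0 : EuclideanSpace ℝ (Fin n)) γ, ENNReal.ofReal (a x ^ 2) ≤
          ENNReal.ofReal C * ∫⁻ x in ball (0 : EuclideanSpace ℝ (Fin n)) 1,
            ENNReal.ofReal (H x ^ 2) := by
  classical
  obtain ⟨ε1, hε1, c1, hc1, κ, hκ, hloc⟩ := aux_local n k hk p hp hp0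
  have hg : 0 < (1 - γ) / 2 := by linarith [hγ.2]
  set V : ℝ := (volume (ball (0 : EuclideanSpace ℝ (Fin n)) 1)).toReal with hV
  have hV0 : 0 ≤ V := ENNReal.toReal_nonneg
  have hVe : volume (ball (0 : EuclideanSpace ℝ (Fin n)) 1) = ENNReal.ofReal V :=
    (ENNReal.ofReal_toReal measure_ball_lt_top.ne).symm
  set C : ℝ := (4 ^ k * 3 ^ n * V + 1) / (c1 ^ 2 * κ) with hC
  refine ⟨min ε1 (((1 - γ) / 2) ^ k), by positivity, C, by positivity, ?_⟩
  intro a e H ha he ha0 hab heb hH hmin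
  have hk0 : k ≠ 0 := by omega
  set r : EuclideanSpace ℝ (Fin n) → ℝ := fun y => |a y| ^ ((k : ℝ)⁻¹) with hr
  have hr0 : ∀ y, 0 ≤ r y := fun y => by positivity
  have hrk : ∀ y, r y ^ k = |a y| := fun y => Real.rpow_inv_natCast_pow (abs_nonneg _) hk0
  set t : Set (EuclideanSpace ℝ (Fin n)) := {y | y ∈ ball 0 γ ∧ a y ≠ 0} with ht
  have htb : ∀ y ∈ t, y ∈ ball (0 : EuclideanSpace ℝ (Fin n)) 1 := fun y hy =>
    ball_subset_ball hγ.2.le hy.1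
  have hrpos : ∀ y ∈ t, 0 < r y := fun y hy => by
    have := abs_pos.mpr hy.2
    positivity
  have hrle : ∀ y ∈ t, r y ≤ (1 - γ) / 2 := fun y hy => by
    have h1 := (ha0 y (htb y hy)).trans (min_le_right _ _)
    rw [← hrk] at h1
    exact (pow_le_pow_iff_left₀ (hr0 y) hg.le hk0).mp h1
  have hsub : ∀ y ∈ t, closedBall y (r y) ⊆ ball 0 1 := fun y hy => by
    apply closedBall_subset_ball'
    have h1 := hy.1
    rw [mem_ball] at h1
    linarith [hrle y hy]
  obtain ⟨u, hut, hdisj, hcov⟩ := Vitali.exists_disjoint_subfamily_covering_enlargement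
    (fun y => closedBall y (r y)) t r 2 one_lt_two (fun y _ => hr0 y) ((1 - γ) / 2) hrle
    (fun y _ => nonempty_closedBall.mpr (hr0 y))
  have huc : u.Countable := by
    apply hdisj.countable_of_nonempty_interior
    intro y hy
    exact ⟨y, ball_subset_interior_closedBall (mem_ball_self (hrpos y (hut hy)))⟩
  have hucc : Countable u := huc.to_subtype
  -- local lower bound
  have hlow : ∀ y ∈ t, ENNReal.ofReal (c1 ^ 2 * κ * (r y ^ (2 * k) * r y ^ n)) ≤
      ∫⁻ x in closedBall y (r y), ENNReal.ofReal (H x ^ 2) := by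
    intro y hy
    have h1 := hloc a e ha he (fun x hx => (hab x hx).trans (min_le_left _ _))
      (fun x hx => (heb x hx).trans (min_le_left _ _)) y (r y) (hrpos y hy) (hsub y hy)
      (hrk y).symm
    have hm : AEMeasurable (fun x => ENNReal.ofReal (H x ^ 2))
        (volume.restrict (closedBall y (r y))) :=
      ((hH.mono_measure (Measure.restrict_mono (hsub y hy) le_rfl)).pow_const 2).ennreal_ofReal
    have h2 := mul_meas_ge_le_lintegral₀ hm (ENNReal.ofReal ((c1 * r y ^ k) ^ 2))
    refine le_trans ?_ h2
    have e1 : c1 ^ 2 * κ * (r y ^ (2 * k) * r y ^ n) = (c1 * r y ^ k) ^ 2 * (κ * r y ^ n) := by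
      ring
    rw [e1, ENNReal.ofReal_mul (by positivity)]
    gcongr
    refine h1.trans ?_
    rw [Measure.restrict_apply' measurableSet_closedBall]
    apply measure_mono
    intro x hx
    refine ⟨?_, hx.1⟩
    have h3 : c1 * r y ^ k ≤ H x := (le_min hx.2.1 hx.2.2).trans (hmin x (hsub y hy hx.1))
    have h4 : 0 ≤ c1 * r y ^ k := by have := hr0 y; positivity
    exact ENNReal.ofReal_le_ofReal (pow_le_pow_left₀ h4 h3 2)
  have hpt : ∀ x ∈ ball (0 : EuclideanSpace ℝ (Fin n)) γ, ENNReal.ofReal (a x ^ 2) ≤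
      ∑' y : u, (closedBall (y : EuclideanSpace ℝ (Fin n)) (3 * r y)).indicator
        (fun _ => ENNReal.ofReal (4 ^ k * r y ^ (2 * k))) x := by
    intro x hx
    by_cases hax : a x = 0
    · simp [hax]
    obtain ⟨y, hyu, ⟨q, hq1, hq2⟩, hle⟩ := hcov x ⟨hx, hax⟩
    refine le_trans ?_ (ENNReal.le_tsum (⟨y, hyu⟩ : u))
    have hmem : x ∈ closedBall y (3 * r y) := by
      rw [mem_closedBall] at *
      have := dist_triangle_left x y q
      linarith
    rw [Set.indicator_of_mem hmem]
    apply ENNReal.ofReal_le_ofReal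
    have e1 : a x ^ 2 = (r x ^ k) ^ 2 := by rw [hrk, sq_abs]
    have e2 : (4 : ℝ) ^ k * r y ^ (2 * k) = ((2 * r y) ^ k) ^ 2 := by
      rw [mul_pow, mul_pow, ← pow_mul, ← pow_mul, mul_comm k 2, pow_mul 2 2 k]; norm_num
    rw [e1, e2]
    have := hr0 x
    gcongr
  calc ∫⁻ x in ball (0 : EuclideanSpace ℝ (Fin n)) γ, ENNReal.ofReal (a x ^ 2)
      ≤ ∫⁻ x in ball (0 : EuclideanSpace ℝ (Fin n)) γ,
        ∑' y : u, (closedBall (y : EuclideanSpace ℝ (Fin n)) (3 * r y)).indicator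
        (fun _ => ENNReal.ofReal (4 ^ k * r y ^ (2 * k))) x :=
        setLIntegral_mono' measurableSet_ball hpt
    _ ≤ ∫⁻ x, ∑' y : u, (closedBall (y : EuclideanSpace ℝ (Fin n)) (3 * r y)).indicator
        (fun _ => ENNReal.ofReal (4 ^ k * r y ^ (2 * k))) x := setLIntegral_le_lintegral _ _
    _ = ∑' y : u, ENNReal.ofReal (4 ^ k * r y ^ (2 * k)) *
          volume (closedBall (y : EuclideanSpace ℝ (Fin n)) (3 * r y)) := by
        rw [lintegral_tsum (fun y => (measurable_const.indicator measurableSet_closedBall).aemeasurable)]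
        congr 1
        ext y
        rw [lintegral_indicator_const measurableSet_closedBall]
    _ ≤ ∑' y : u, ENNReal.ofReal C * ∫⁻ x in closedBall (y : EuclideanSpace ℝ (Fin n)) (r y),
          ENNReal.ofReal (H x ^ 2) := by
        apply ENNReal.tsum_le_tsum
        intro y
        have hr0y := hr0 (y : EuclideanSpace ℝ (Fin n))
        refine le_trans ?_ (mul_le_mul_right (hlow y (hut y.2)) _)
        rw [Measure.addHaar_closedBall _ _ (by positivity), finrank_euclideanSpace_fin, hVe,
          ← ENNReal.ofReal_mul (by positivity), ← ENNReal.ofReal_mul (by positivity),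
          ← ENNReal.ofReal_mul (by positivity)]
        apply ENNReal.ofReal_le_ofReal
        have e3 : C * (c1 ^ 2 * κ * (r y ^ (2 * k) * r y ^ n)) =
          (4 ^ k * 3 ^ n * V + 1) * (r y ^ (2 * k) * r y ^ n) := by
          rw [hC]; field_simp
        rw [e3]
        have : 0 ≤ r y ^ (2 * k) * r y ^ n := by positivity
        rw [mul_pow]
        linarith
    _ = ENNReal.ofReal C * ∑' y : u, ∫⁻ x in closedBall (y : EuclideanSpace ℝ (Fin n)) (r y),
          ENNReal.ofReal (H x ^ 2) := ENNReal.tsum_mul_left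
    _ ≤ _ := by
        gcongr
        rw [← lintegral_iUnion (fun y : u => measurableSet_closedBall) (by
          intro y z hyz
          exact hdisj y.2 z.2 (fun h => hyz (Subtype.ext h)))]
        apply lintegral_mono_set
        exact Set.iUnion_subset fun y => hsub y (hut y.2)

lemma aux_CdNorm (n m d : ℕ) (w : EuclideanSpace ℝ (Fin n) → EuclideanSpace ℝ (Fin m))
    (hb : ∀ j ≤ d, BddAbove
          ((fun x => ‖iteratedFDerivWithin ℝ j w (ball 0 1) x‖) ''
            ball (0 : EuclideanSpace ℝ (Fin n)) 1)) (j : ℕ) (hj : j ≤ d)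
    (x : EuclideanSpace ℝ (Fin n)) (hx : x ∈ ball (0 : EuclideanSpace ℝ (Fin n)) 1) :
    ‖iteratedFDerivWithin ℝ j w (ball 0 1) x‖ ≤ CdNorm n m d w := by
  unfold CdNorm
  have h0 : ∀ i : ℕ, 0 ≤ ⨆ x ∈ ball (0 : EuclideanSpace ℝ (Fin n)) 1,
      ‖iteratedFDerivWithin ℝ i w (ball 0 1) x‖ := fun i =>
    Real.iSup_nonneg fun x => Real.iSup_nonneg fun _ => norm_nonneg _
  refine le_trans ?_ (Finset.single_le_sum (f := fun i => ⨆ x ∈ ball (0 : EuclideanSpace ℝ (Fin n)) 1,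
      ‖iteratedFDerivWithin ℝ i w (ball 0 1) x‖) (fun i _ => h0 i)
      (Finset.mem_range.mpr (Nat.lt_succ_of_le hj)))
  obtain ⟨M, hM⟩ := hb j hj
  have hbd : BddAbove (Set.range fun x => ⨆ (_ : x ∈ ball (0 : EuclideanSpace ℝ (Fin n)) 1),
      ‖iteratedFDerivWithin ℝ j w (ball 0 1) x‖) := by
    refine ⟨max M 0, ?_⟩
    rintro _ ⟨z, rfl⟩
    by_cases hz : z ∈ ball (0 : EuclideanSpace ℝ (Fin n)) 1
    · simp only [hz, ciSup_unique]
      exact (hM ⟨z, hz, rfl⟩).trans (le_max_left _ _)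
    · refine Real.iSup_le (fun h => absurd h hz) (le_max_right _ _)
  refine le_trans ?_ (le_ciSup hbd x)
  simp only [hx, ciSup_unique]
  exact le_rfl

lemma aux_comp {n m : ℕ} (k : ℕ) (B : Set (EuclideanSpace ℝ (Fin n))) (hB : IsOpen B)
    (f g : EuclideanSpace ℝ (Fin n) → EuclideanSpace ℝ (Fin m)) (hf : ContDiffOn ℝ k f B)
    (hg : ContDiffOn ℝ k g B) (l : Fin m) (s t : ℝ)
    (x : EuclideanSpace ℝ (Fin n)) (hx : x ∈ B)
    (hfs : ‖iteratedFDerivWithin ℝ k f B x‖ ≤ s) (hgt : ‖iteratedFDerivWithin ℝ k g B x‖ ≤ t) :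
    ‖iteratedFDerivWithin ℝ k (fun x => (f x - g x) l) B x‖ ≤ s + t ∧
    ‖iteratedFDerivWithin ℝ k (fun x => (f x + g x) l) B x‖ ≤ s + t := by
  have key : ∀ g : EuclideanSpace ℝ (Fin n) → EuclideanSpace ℝ (Fin m), ContDiffOn ℝ k g B →
      ‖iteratedFDerivWithin ℝ k g B x‖ ≤ t →
      ‖iteratedFDerivWithin ℝ k (fun x => (f x + g x) l) B x‖ ≤ s + t := by
    intro g hg hgt
    have h1 : (fun x => (f x + g x) l) =
      (EuclideanSpace.proj l : EuclideanSpace ℝ (Fin m) →L[ℝ] ℝ) ∘ (f + g) := by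
      ext x; simp
    rw [h1]
    refine (ContinuousLinearMap.norm_iteratedFDerivWithin_comp_left _ ((hf.add hg) x hx)
      hB.uniqueDiffOn hx le_rfl).trans ?_
    have h2 : ‖(EuclideanSpace.proj l : EuclideanSpace ℝ (Fin m) →L[ℝ] ℝ)‖ ≤ 1 := by
      refine ContinuousLinearMap.opNorm_le_bound _ zero_le_one fun z => ?_
      rw [one_mul]
      exact PiLp.norm_apply_le z l
    refine (mul_le_of_le_one_left (norm_nonneg _) h2).trans ?_
    change ‖iteratedFDerivWithin ℝ k (f + g) B x‖ ≤ s + t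
    rw [iteratedFDerivWithin_add_apply (hf x hx) (hg x hx) hB.uniqueDiffOn hx]
    exact (norm_add_le _ _).trans (add_le_add hfs hgt)
  refine ⟨?_, key g hg hgt⟩
  have := key (-g) hg.neg (by
    rw [iteratedFDerivWithin_neg_apply hB.uniqueDiffOn hx, norm_neg]; exact hgt)
  simpa [sub_eq_add_neg] using this

/-- two-valued `L²` comparison estimate near a nonzero polynomial. -/
theorem stmt_0 (n m : ℕ) (hn : 1 ≤ n) (hm : 1 ≤ m) (γ : ℝ) (hγ : γ ∈ Set.Ioo (0 : ℝ) 1)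
    (d : ℕ) (ψ : EuclideanSpace ℝ (Fin n) → EuclideanSpace ℝ (Fin m))
    (hψpoly : ∃ p : Fin m → MvPolynomial (Fin n) ℝ,
      (∀ i, (p i).totalDegree ≤ d) ∧
      ∀ (x : EuclideanSpace ℝ (Fin n)) (i : Fin m),
        ψ x i = MvPolynomial.eval (fun j => x j) (p i))
    (hψne : ψ ≠ 0) :
    ∃ ε : ℝ, 0 < ε ∧ ∃ C : ℝ, 0 < C ∧
      ∀ u v : EuclideanSpace ℝ (Fin n) → EuclideanSpace ℝ (Fin m),
        ContDiffOn ℝ (d : ℕ∞) u (ball 0 1) → ContDiffOn ℝ (d : ℕ∞) v (ball 0 1) →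
        (∀ j ≤ d, BddAbove
          ((fun x => ‖iteratedFDerivWithin ℝ j (u - ψ) (ball 0 1) x‖) ''
            ball (0 : EuclideanSpace ℝ (Fin n)) 1)) →
        (∀ j ≤ d, BddAbove
          ((fun x => ‖iteratedFDerivWithin ℝ j (v - ψ) (ball 0 1) x‖) ''
            ball (0 : EuclideanSpace ℝ (Fin n)) 1)) →
        CdNorm n m d (u - ψ) + CdNorm n m d (v - ψ) < ε →
        (∫ x in ball (0 : EuclideanSpace ℝ (Fin n)) γ, ‖u x - v x‖ ^ 2) ≤
          C * ∫ x in ball (0 : EuclideanSpace ℝ (Fin n)) 1,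
            (min ‖u x - v x‖ ‖u x + v x‖) ^ 2 := by
  classical
  obtain ⟨p, hpd, hpe⟩ := hψpoly
  -- pick a nonzero component
  obtain ⟨i, hi⟩ : ∃ i, p i ≠ 0 := by
    by_contra hcon
    push Not at hcon
    apply hψne
    ext x i
    simp [hpe, hcon]
  set k := (p i).totalDegree with hk
  have hψc : ContDiff ℝ d ψ := by
    rw [contDiff_euclidean]
    intro j
    have h1 : (fun x => ψ x j) = fun x : EuclideanSpace ℝ (Fin n) => ∑ s ∈ (p j).support,
        (p j).coeff s * ∏ q, (x q) ^ (s q) := by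
      ext x
      rw [hpe, MvPolynomial.eval_eq']
    rw [h1]
    fun_prop
  -- common reduction: a scalar lintegral bound for each component is enough
  suffices hsuff : ∃ ε : ℝ, 0 < ε ∧ ∃ C : ℝ, 0 < C ∧
      ∀ f g : EuclideanSpace ℝ (Fin n) → EuclideanSpace ℝ (Fin m), ContDiffOn ℝ d f (ball 0 1) →
        ContDiffOn ℝ d g (ball 0 1) → ∀ s t : ℝ, s + t < ε →
        (∀ j ≤ d, ∀ x ∈ ball (0 : EuclideanSpace ℝ (Fin n)) 1, ‖iteratedFDerivWithin ℝ j f (ball 0 1) x‖ ≤ s) →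
        (∀ j ≤ d, ∀ x ∈ ball (0 : EuclideanSpace ℝ (Fin n)) 1, ‖iteratedFDerivWithin ℝ j g (ball 0 1) x‖ ≤ t) →
        ∀ H : EuclideanSpace ℝ (Fin n) → ℝ, H = (fun x => min ‖f x - g x‖ ‖(2 : ℝ) • ψ x + (f x + g x)‖) →
        AEMeasurable H (volume.restrict (ball 0 1)) →
        ∀ l, ∫⁻ x in ball (0 : EuclideanSpace ℝ (Fin n)) γ, ENNReal.ofReal (((f x - g x) l) ^ 2) ≤
          ENNReal.ofReal C * ∫⁻ x in ball (0 : EuclideanSpace ℝ (Fin n)) 1, ENNReal.ofReal (H x ^ 2) by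
    obtain ⟨ε, hε, C, hC, hall⟩ := hsuff
    refine ⟨ε, hε, m * C, by positivity, ?_⟩
    intro u v hu hv hub hvb huv
    have hu' : ContDiffOn ℝ d u (ball 0 1) := by exact_mod_cast hu
    have hv' : ContDiffOn ℝ d v (ball 0 1) := by exact_mod_cast hv
    set f := u - ψ with hf
    set g := v - ψ with hg
    have hfc : ContDiffOn ℝ d f (ball 0 1) := hu'.sub hψc.contDiffOn
    have hgc : ContDiffOn ℝ d g (ball 0 1) := hv'.sub hψc.contDiffOn
    have hfb := aux_CdNorm n m d f hub
    have hgb := aux_CdNorm n m d g hvb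
    set H : EuclideanSpace ℝ (Fin n) → ℝ := fun x => min ‖u x - v x‖ ‖u x + v x‖ with hH
    have hfg : ∀ x, f x - g x = u x - v x := fun x => by simp [hf, hg]
    have hfg2 : ∀ x, (2 : ℝ) • ψ x + (f x + g x) = u x + v x := fun x => by
      simp only [hf, hg, Pi.sub_apply, two_smul]; abel
    have hcuv : ContinuousOn (fun x => u x - v x) (ball 0 1) :=
      hu'.continuousOn.sub hv'.continuousOn
    have hHc : ContinuousOn H (ball 0 1) :=
      hcuv.norm.inf (hu'.continuousOn.add hv'.continuousOn).norm
    have hHm : AEMeasurable H (volume.restrict (ball 0 1)) := hHc.aemeasurable measurableSet_ball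
    have hbase := hall f g hfc hgc _ _ huv (fun j hj x hx => hfb j hj x hx)
      (fun j hj x hx => hgb j hj x hx) H (by ext x; simp only [hH, hfg, hfg2]) hHm
    have hbd : ∀ x ∈ ball (0 : EuclideanSpace ℝ (Fin n)) 1, ‖u x - v x‖ ≤ ε := fun x hx => by
      rw [← hfg]
      have h1 := hfb 0 (Nat.zero_le _) x hx
      have h2 := hgb 0 (Nat.zero_le _) x hx
      rw [norm_iteratedFDerivWithin_zero] at h1 h2
      linarith [norm_sub_le (f x) (g x)]
    have hHle : ∀ x ∈ ball (0 : EuclideanSpace ℝ (Fin n)) 1, H x ^ 2 ≤ ε ^ 2 := fun x hx => by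
      have h1 : H x ≤ ε := (min_le_left _ _).trans (hbd x hx)
      have h2 : 0 ≤ H x := le_min (norm_nonneg _) (norm_nonneg _)
      gcongr
    have hHfin : ∫⁻ x in ball (0 : EuclideanSpace ℝ (Fin n)) 1, ENNReal.ofReal (H x ^ 2) ≠ ⊤ := by
      refine ne_of_lt (lt_of_le_of_lt (setLIntegral_mono' (g := fun _ => ENNReal.ofReal (ε ^ 2))
        measurableSet_ball (fun x hx => ENNReal.ofReal_le_ofReal (hHle x hx))) ?_)
      rw [setLIntegral_const]
      exact ENNReal.mul_lt_top ENNReal.ofReal_lt_top measure_ball_lt_top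
    have hsubb : ball (0 : EuclideanSpace ℝ (Fin n)) γ ⊆ ball 0 1 := ball_subset_ball hγ.2.le
    have hsum : ∫⁻ x in ball (0 : EuclideanSpace ℝ (Fin n)) γ, ENNReal.ofReal (‖u x - v x‖ ^ 2) ≤
        ENNReal.ofReal (m * C) * ∫⁻ x in ball (0 : EuclideanSpace ℝ (Fin n)) 1, ENNReal.ofReal (H x ^ 2) := by
      have h1 : ∀ x, ENNReal.ofReal (‖u x - v x‖ ^ 2) =
          ∑ l, ENNReal.ofReal (((f x - g x) l) ^ 2) := fun x => by
        rw [EuclideanSpace.norm_sq_eq, ENNReal.ofReal_sum_of_nonneg (fun _ _ => by positivity)]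
        simp [hfg]
      simp_rw [h1]
      rw [lintegral_finsetSum' _ (fun l _ => ?_)]
      · refine (Finset.sum_le_sum fun l _ => hbase l).trans ?_
        rw [Finset.sum_const, Finset.card_univ, Fintype.card_fin, nsmul_eq_mul, ← mul_assoc,
          ENNReal.ofReal_mul (by positivity), ENNReal.ofReal_natCast]
      · simp_rw [hfg]
        have h2 : ContinuousOn (fun x => ((u x - v x) l) ^ 2) (ball 0 γ) :=
          ((EuclideanSpace.proj (𝕜 := ℝ) l).continuous.comp_continuousOn
            (hcuv.mono hsubb)).pow 2
        exact (h2.aemeasurable measurableSet_ball).ennreal_ofReal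
    have h9 : AEStronglyMeasurable (fun x => ‖u x - v x‖ ^ 2) (volume.restrict (ball 0 γ)) :=
      ((hcuv.mono hsubb).norm.pow 2).aestronglyMeasurable measurableSet_ball
    have h10 : AEStronglyMeasurable (fun x => (min ‖u x - v x‖ ‖u x + v x‖) ^ 2)
        (volume.restrict (ball 0 1)) :=
      (hHc.pow 2).aestronglyMeasurable measurableSet_ball
    rw [integral_eq_lintegral_of_nonneg_ae (Filter.Eventually.of_forall fun x => by positivity)
      h9,
      integral_eq_lintegral_of_nonneg_ae (Filter.Eventually.of_forall fun x => by positivity)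
      h10]
    have h3 := ENNReal.toReal_mono (ENNReal.mul_ne_top ENNReal.ofReal_ne_top hHfin) hsum
    rwa [ENNReal.toReal_mul, ENNReal.toReal_ofReal (by positivity)] at h3
  rcases Nat.eq_zero_or_pos k with hk0 | hkpos
  · -- degree zero
    set c := (p i).coeff 0 with hc
    have hpc : p i = MvPolynomial.C c := MvPolynomial.totalDegree_eq_zero_iff_eq_C.mp hk0
    have hc0 : c ≠ 0 := by
      intro h0
      rw [h0] at hpc
      exact hi (by simpa using hpc)
    have hcpos : 0 < |c| := abs_pos.mpr hc0
    refine ⟨|c|, hcpos, 1, one_pos, ?_⟩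
    intro f g hf hg s t hst hfs hgt H hH hHm l
    rw [ENNReal.ofReal_one, one_mul]
    refine (lintegral_mono_set (ball_subset_ball hγ.2.le)).trans ?_
    refine setLIntegral_mono' measurableSet_ball fun x hx => ?_
    apply ENNReal.ofReal_le_ofReal
    have h1 := hfs 0 (Nat.zero_le _) x hx
    have h2 := hgt 0 (Nat.zero_le _) x hx
    rw [norm_iteratedFDerivWithin_zero] at h1 h2
    have h3 : ‖f x - g x‖ ≤ |c| := by linarith [norm_sub_le (f x) (g x)]
    have h4 : ‖f x + g x‖ ≤ |c| := by linarith [norm_add_le (f x) (g x)]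
    have h5 : |c| ≤ ‖ψ x‖ := by
      have := PiLp.norm_apply_le (ψ x) i
      rw [hpe, hpc, MvPolynomial.eval_C, Real.norm_eq_abs] at this
      exact this
    have h6 : |c| ≤ ‖(2 : ℝ) • ψ x + (f x + g x)‖ := by
      have h7 := norm_sub_le ((2 : ℝ) • ψ x + (f x + g x)) (f x + g x)
      rw [add_sub_cancel_right, norm_smul, Real.norm_two] at h7
      linarith
    have h8 : H x = ‖f x - g x‖ := by
      rw [hH]; exact min_eq_left (h3.trans h6)
    rw [h8, ← sq_abs]
    have := PiLp.norm_apply_le (f x - g x) l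
    rw [Real.norm_eq_abs] at this
    gcongr
  · obtain ⟨ε, hε, C, hC, hcore⟩ := aux_core n k hkpos (p i) rfl hi γ hγ
    refine ⟨ε, hε, C, hC, ?_⟩
    intro f g hf hg s t hst hfs hgt H hH hHm l
    have hkd : k ≤ d := hpd i
    have hfk : ContDiffOn ℝ k f (ball 0 1) := hf.of_le (by exact_mod_cast hkd)
    have hgk : ContDiffOn ℝ k g (ball 0 1) := hg.of_le (by exact_mod_cast hkd)
    refine hcore (fun x => (f x - g x) l) (fun x => (f x + g x) i) H ?_ ?_ ?_ ?_ ?_ hHm ?_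
    · exact (EuclideanSpace.proj (𝕜 := ℝ) l).contDiff.comp_contDiffOn (hfk.sub hgk)
    · exact (EuclideanSpace.proj (𝕜 := ℝ) i).contDiff.comp_contDiffOn (hfk.add hgk)
    · intro x hx
      have h1 := hfs 0 (Nat.zero_le _) x hx
      have h2 := hgt 0 (Nat.zero_le _) x hx
      rw [norm_iteratedFDerivWithin_zero] at h1 h2
      have := PiLp.norm_apply_le (f x - g x) l
      rw [Real.norm_eq_abs] at this
      linarith [norm_sub_le (f x) (g x)]
    · intro x hx
      exact (aux_comp k _ isOpen_ball f g hfk hgk l s t x hx (hfs k hkd x hx)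
        (hgt k hkd x hx)).1.trans hst.le
    · intro x hx
      exact (aux_comp k _ isOpen_ball f g hfk hgk i s t x hx (hfs k hkd x hx)
        (hgt k hkd x hx)).2.trans hst.le
    · intro x hx
      rw [hH]
      refine min_le_min ?_ ?_
      · have := PiLp.norm_apply_le (f x - g x) l
        rwa [Real.norm_eq_abs] at this
      · have := PiLp.norm_apply_le ((2 : ℝ) • ψ x + (f x + g x)) i
        rw [Real.norm_eq_abs] at this
        refine le_trans (le_of_eq ?_) this
        congr 1
        simp [hpe]
end

section
/- Let f : ℝ → ℝ and g : ℝ² → ℝ be smooth functions with f(0) = 0 and g(0) = 0. Then for every multi-index α = (α₁, α₂) with |α| ≥ 1, D^α(f ∘ g)(0) = Σ_{k=1}^{|α|} (1/k!) f^{(k)}(0) D^α(g^k)(0), where g^k denotes the pointwise k-th power of g and D^α = ∂^{α₁}_{x₁}∂^{α₂}_{x₂}. -/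
noncomputable section

/-- Directional derivative operator on `ℝ × ℝ`. -/
def pd2 (v : ℝ × ℝ) (f : ℝ × ℝ → ℝ) : ℝ × ℝ → ℝ := fun x => fderiv ℝ f x v

/-- `D^α = ∂^{a}_{x₁} ∂^{b}_{x₂}` for the multi-index `α = (a, b)`. -/
def Dxy (a b : ℕ) (h : ℝ × ℝ → ℝ) : ℝ × ℝ → ℝ :=
  (pd2 ((1 : ℝ), (0 : ℝ)))^[a] ((pd2 ((0 : ℝ), (1 : ℝ)))^[b] h)

end

/-- Universal chain rule expansion of order `n` for the operator `T`. -/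
def FdBExp (g : ℝ × ℝ → ℝ) (n : ℕ) (T : (ℝ × ℝ → ℝ) → (ℝ × ℝ → ℝ)) : Prop :=
  ∃ c : ℕ → ℝ × ℝ → ℝ, (∀ j, ContDiff ℝ (⊤ : ℕ∞) (c j)) ∧
    ∀ F : ℝ → ℝ, ContDiff ℝ (⊤ : ℕ∞) F →
      T (fun X => F (g X)) =
        fun X => ∑ j ∈ Finset.range (n + 1), iteratedDeriv j F (g X) * c j X

theorem pd2_smooth (v : ℝ × ℝ) (h : ℝ × ℝ → ℝ) (hh : ContDiff ℝ (⊤ : ℕ∞) h) :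
    ContDiff ℝ (⊤ : ℕ∞) (pd2 v h) := by
  unfold pd2
  exact (hh.fderiv_right (m := (⊤ : ℕ∞)) (by simp)).clm_apply contDiff_const

theorem FdBExp_step (g : ℝ × ℝ → ℝ) (hg : ContDiff ℝ (⊤ : ℕ∞) g) (n : ℕ)
    (T : (ℝ × ℝ → ℝ) → (ℝ × ℝ → ℝ)) (v : ℝ × ℝ) (h : FdBExp g n T) :
    FdBExp g (n + 1) (fun u => pd2 v (T u)) := by
  obtain ⟨c, hc, hT⟩ := h
  refine ⟨fun j => (if j < n + 1 then pd2 v (c j) else fun _ => 0) +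
    (Nat.casesOn j (fun _ => 0) (fun i => fun X => c i X * pd2 v g X) : ℝ × ℝ → ℝ), ?_, ?_⟩
  · intro j
    refine ContDiff.add ?_ ?_
    · split_ifs
      · exact pd2_smooth v _ (hc j)
      · exact contDiff_const
    · cases j with
      | zero => exact contDiff_const
      | succ i => exact (hc i).mul (pd2_smooth v g hg)
  · intro F hF
    funext X
    simp only [hT F hF]
    have hgd : HasFDerivAt g (fderiv ℝ g X) X :=
      (hg.differentiable (by simp) X).hasFDerivAt
    have hder : ∀ j ∈ Finset.range (n + 1),
        HasFDerivAt (fun X => iteratedDeriv j F (g X) * c j X)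
          (iteratedDeriv j F (g X) • fderiv ℝ (c j) X +
            c j X • (iteratedDeriv (j + 1) F (g X) • fderiv ℝ g X)) X := by
      intro j _
      have h1 : HasDerivAt (iteratedDeriv j F) (iteratedDeriv (j + 1) F (g X)) (g X) := by
        rw [iteratedDeriv_succ]
        exact (hF.differentiable_iteratedDeriv j (by exact_mod_cast ENat.natCast_lt_top j)
          (g X)).hasDerivAt
      exact (h1.comp_hasFDerivAt X hgd).mul
        ((hc j).differentiable (by simp) X).hasFDerivAt
    have hs := (HasFDerivAt.fun_sum hder).fderiv
    have : pd2 v (fun X => ∑ j ∈ Finset.range (n + 1), iteratedDeriv j F (g X) * c j X) X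
        = ∑ j ∈ Finset.range (n + 1), (iteratedDeriv j F (g X) * pd2 v (c j) X +
            c j X * (iteratedDeriv (j + 1) F (g X) * pd2 v g X)) := by
      unfold pd2
      rw [hs]
      simp
    rw [this, Finset.sum_add_distrib]
    simp only [Pi.add_apply, mul_add]
    rw [Finset.sum_add_distrib]
    congr 1
    · rw [Finset.sum_range_succ _ (n + 1)]
      simp only [lt_irrefl, if_false, mul_zero, add_zero]
      refine Finset.sum_congr rfl fun j hj => ?_
      rw [if_pos (Finset.mem_range.1 hj)]
    · rw [Finset.sum_range_succ' _ (n + 1)]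
      refine Eq.trans ?_ (add_zero _).symm |>.trans
        (congrArg _ (mul_zero (iteratedDeriv 0 F (g X))).symm)
      refine Finset.sum_congr rfl fun j hj => ?_
      ring

theorem FdBExp_iter (g : ℝ × ℝ → ℝ) (hg : ContDiff ℝ (⊤ : ℕ∞) g) (n : ℕ)
    (T : (ℝ × ℝ → ℝ) → (ℝ × ℝ → ℝ)) (v : ℝ × ℝ) (h : FdBExp g n T) (m : ℕ) :
    FdBExp g (n + m) (fun u => (pd2 v)^[m] (T u)) := by
  induction m with
  | zero => exact h
  | succ m ih =>
    simp only [Function.iterate_succ_apply']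
    exact FdBExp_step g hg (n + m) _ v ih

theorem FdBExp_Dxy (g : ℝ × ℝ → ℝ) (hg : ContDiff ℝ (⊤ : ℕ∞) g) (a b : ℕ) :
    FdBExp g (a + b) (Dxy a b) := by
  have h0 : FdBExp g 0 (fun u => u) :=
    ⟨fun _ _ => 1, fun _ => contDiff_const, fun F _ => by simp⟩
  have := FdBExp_iter g hg _ _ ((1 : ℝ), (0 : ℝ))
    (FdBExp_iter g hg 0 _ ((0 : ℝ), (1 : ℝ)) h0 b) a
  rw [show 0 + b + a = a + b by omega] at this
  exact this

theorem iteratedDeriv_pow_at_zero (k j : ℕ) :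
    iteratedDeriv j (fun t : ℝ => t ^ k) 0 = if j = k then (k.factorial : ℝ) else 0 := by
  rw [iteratedDeriv_pow]
  rcases lt_trichotomy j k with h | h | h
  · simp [h.ne, Nat.sub_ne_zero_of_lt h]
  · subst h
    simp [Nat.descFactorial_self]
  · simp [h.ne', Nat.descFactorial_of_lt h]

/-- Faà di Bruno formula at the origin, in the form used in the
majorant argument. -/
theorem stmt_10 (f : ℝ → ℝ) (g : ℝ × ℝ → ℝ) (hf : ContDiff ℝ (⊤ : ℕ∞) f)
    (hg : ContDiff ℝ (⊤ : ℕ∞) g) (hf0 : f 0 = 0) (hg0 : g 0 = 0) :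
    ∀ a b : ℕ, 1 ≤ a + b →
      Dxy a b (fun X => f (g X)) 0 =
        ∑ k ∈ Finset.Icc 1 (a + b),
          (1 / (Nat.factorial k : ℝ)) * iteratedDeriv k f 0 *
            Dxy a b (fun X => g X ^ k) 0 := by
  intro a b _
  obtain ⟨c, -, hT⟩ := FdBExp_Dxy g hg a b
  have hpow : ∀ k ∈ Finset.Icc 1 (a + b),
      Dxy a b (fun X => g X ^ k) 0 = (k.factorial : ℝ) * c k 0 := by
    intro k hk
    have hk' : k < a + b + 1 := by have := (Finset.mem_Icc.1 hk).2; omega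
    rw [hT (fun t => t ^ k) (contDiff_id.pow k)]
    simp only [hg0, iteratedDeriv_pow_at_zero, ite_mul, zero_mul]
    rw [Finset.sum_ite_eq' (Finset.range (a + b + 1)) k, if_pos (Finset.mem_range.2 hk')]
  rw [hT f hf]
  simp only [hg0]
  rw [Finset.range_eq_Ico, Finset.sum_eq_sum_Ico_succ_bot (by omega)]
  simp only [iteratedDeriv_zero, hf0, zero_mul, zero_add]
  refine Finset.sum_congr (by ext; simp) fun k hk => ?_
  rw [hpow k hk]
  have : (k.factorial : ℝ) ≠ 0 := by exact_mod_cast k.factorial_ne_zero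
  field_simp
end

section
/- Let Φ : ℝ → ℝ and v : ℝ → ℝ be smooth functions with Φ(0) = 0 and v(0) = 0, and let c ∈ ℝ. Then for all integers j ≥ 0 and M ≥ 1, ∂_ξ^j ∂_ζ^M [ Φ( c e^{ξ} v(ζ) ) ] evaluated at (ξ,ζ) = (0,0) equals Σ_{k=1}^{M} (c^k k^j / k!) Φ^{(k)}(0) (d^M/dζ^M)(v(ζ)^k)|_{ζ=0}. -/
theorem aux_vanish (v : ℝ → ℝ) (hv : ContDiff ℝ (⊤ : ℕ∞) v) (hv0 : v 0 = 0) (m : ℕ) :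
    ∀ (Ψ w : ℝ → ℝ), ContDiff ℝ (⊤ : ℕ∞) Ψ → ContDiff ℝ (⊤ : ℕ∞) w →
      (∀ k ≤ m, iteratedDeriv k Ψ 0 = 0) →
      iteratedDeriv m (fun x => Ψ (v x) * w x) 0 = 0 := by
  induction m with
  | zero =>
    intro Ψ w _ _ h
    have := h 0 le_rfl
    simp only [iteratedDeriv_zero] at this ⊢
    simp [hv0, this]
  | succ m ih =>
    intro Ψ w hΨ hw h
    have dΨ : ContDiff ℝ (⊤ : ℕ∞) (deriv Ψ) := (contDiff_infty_iff_deriv.1 hΨ).2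
    have dw : ContDiff ℝ (⊤ : ℕ∞) (deriv w) := (contDiff_infty_iff_deriv.1 hw).2
    have dv : ContDiff ℝ (⊤ : ℕ∞) (deriv v) := (contDiff_infty_iff_deriv.1 hv).2
    have key : deriv (fun x => Ψ (v x) * w x) =
        (fun x => deriv Ψ (v x) * (deriv v x * w x)) + (fun x => Ψ (v x) * deriv w x) := by
      funext x
      have h1 := ((contDiff_infty_iff_deriv.1 hΨ).1 (v x)).hasDerivAt
      have h2 := ((contDiff_infty_iff_deriv.1 hv).1 x).hasDerivAt
      have h3 := ((contDiff_infty_iff_deriv.1 hw).1 x).hasDerivAt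
      have h4 := ((h1.comp x h2).mul h3).deriv
      simp only [Pi.add_apply]
      refine Eq.trans h4 ?_
      simp only [Function.comp]
      ring
    have c1 : ContDiff ℝ (⊤ : ℕ∞) (fun x => deriv Ψ (v x) * (deriv v x * w x)) :=
      (dΨ.comp hv).mul (dv.mul hw)
    have c2 : ContDiff ℝ (⊤ : ℕ∞) (fun x => Ψ (v x) * deriv w x) := (hΨ.comp hv).mul dw
    rw [iteratedDeriv_succ', key, iteratedDeriv_add
      ((c1.of_le (by exact_mod_cast le_top)).contDiffAt)
      ((c2.of_le (by exact_mod_cast le_top)).contDiffAt),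
      ih _ _ dΨ (dv.mul hw), ih _ _ hΨ dw, add_zero]
    · intro k hk; exact h k (by omega)
    · intro k hk
      rw [← iteratedDeriv_succ']; exact h (k+1) (by omega)

theorem aux_pow (i k : ℕ) : iteratedDeriv i (fun x : ℝ => x ^ k) 0 =
    if i = k then (k.factorial : ℝ) else 0 := by
  have hp : ∏ l ∈ Finset.range i, ((k : ℝ) - l) = (k.descFactorial i : ℝ) := by
    rw [← descPochhammer_eval_eq_prod_range, descPochhammer_eval_eq_descFactorial]
  rw [iteratedDeriv_eq_iterate, iter_deriv_pow, hp]
  split_ifs with h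
  · subst h; simp [Nat.descFactorial_self]
  · rcases lt_or_gt_of_ne h with h | h
    · rw [zero_pow (by omega), mul_zero]
    · simp [Nat.descFactorial_of_lt h]

theorem aux_sum (n M : ℕ) (b : ℕ → ℝ) (f : ℕ → ℝ → ℝ) (hf : ∀ k, ContDiff ℝ (⊤ : ℕ∞) (f k))
    (x : ℝ) :
    iteratedDeriv n (fun x => ∑ k ∈ Finset.Icc 1 M, b k * f k x) x =
      ∑ k ∈ Finset.Icc 1 M, b k * iteratedDeriv n (f k) x := by
  rw [iteratedDeriv_fun_sum]
  · simp only [iteratedDeriv_const_mul_field]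
  · intro k _
    exact ((contDiff_const.mul (hf k)).of_le (by exact_mod_cast le_top)).contDiffAt

theorem aux_comp_s11 (Φ v : ℝ → ℝ) (hΦ : ContDiff ℝ (⊤ : ℕ∞) Φ) (hv : ContDiff ℝ (⊤ : ℕ∞) v)
    (hΦ0 : Φ 0 = 0) (hv0 : v 0 = 0) (a : ℝ) (M : ℕ) :
    iteratedDeriv M (fun ζ => Φ (a * v ζ)) 0 = ∑ k ∈ Finset.Icc 1 M,
      (a ^ k * iteratedDeriv k Φ 0 / (Nat.factorial k : ℝ)) *
        iteratedDeriv M (fun ζ => v ζ ^ k) 0 := by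
  set b : ℕ → ℝ := fun k => a ^ k * iteratedDeriv k Φ 0 / (Nat.factorial k : ℝ) with hb
  have cA : ContDiff ℝ (⊤ : ℕ∞) (fun x => Φ (a * x)) :=
    hΦ.comp (contDiff_const.mul contDiff_id)
  have cT : ContDiff ℝ (⊤ : ℕ∞) (fun x : ℝ => ∑ k ∈ Finset.Icc 1 M, b k * x ^ k) :=
    ContDiff.sum fun k _ => contDiff_const.mul (contDiff_id.pow k)
  have h := aux_vanish v hv hv0 M
    (fun x => Φ (a * x) - ∑ k ∈ Finset.Icc 1 M, b k * x ^ k) (fun _ => 1)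
    (cA.sub cT) contDiff_const ?_
  · simp only [mul_one] at h
    have cA' : ContDiff ℝ (⊤ : ℕ∞) (fun x => Φ (a * v x)) := cA.comp hv
    have cT' : ContDiff ℝ (⊤ : ℕ∞) (fun x : ℝ => ∑ k ∈ Finset.Icc 1 M, b k * v x ^ k) :=
      cT.comp hv
    rw [iteratedDeriv_fun_sub
      ((cA'.of_le (by exact_mod_cast le_top)).contDiffAt)
      ((cT'.of_le (by exact_mod_cast le_top)).contDiffAt),
      aux_sum M M b (fun k x => v x ^ k) (fun k => hv.pow k)] at h
    exact sub_eq_zero.1 h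
  · intro i hi
    rw [iteratedDeriv_fun_sub
      ((cA.of_le (by exact_mod_cast le_top)).contDiffAt)
      ((cT.of_le (by exact_mod_cast le_top)).contDiffAt),
      aux_sum i M b (fun k x => x ^ k) (fun k => contDiff_id.pow k)]
    have e : iteratedDeriv i (fun x => Φ (a * x)) 0 = a ^ i * iteratedDeriv i Φ 0 := by
      rw [iteratedDeriv_comp_const_mul (hΦ.of_le (by exact_mod_cast le_top))]
      simp
    rw [e]
    simp only [aux_pow, mul_ite, mul_zero, Finset.sum_ite_eq, Finset.mem_Icc]
    split_ifs with h1
    · have : (i.factorial : ℝ) ≠ 0 := by positivity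
      simp only [hb]; field_simp; ring
    · have : i = 0 := by omega
      subst this; simp [hΦ0]

/-- bookkeeping identity for mixed derivatives of `Φ(c e^ξ v(ζ))`
at the origin. -/
theorem stmt_11 (Φ v : ℝ → ℝ) (hΦ : ContDiff ℝ (⊤ : ℕ∞) Φ) (hv : ContDiff ℝ (⊤ : ℕ∞) v)
    (hΦ0 : Φ 0 = 0) (hv0 : v 0 = 0) (c : ℝ) :
    ∀ j M : ℕ, 1 ≤ M →
      iteratedDeriv j (fun ξ => iteratedDeriv M (fun ζ => Φ (c * Real.exp ξ * v ζ)) 0) 0 =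
        ∑ k ∈ Finset.Icc 1 M,
          (c ^ k * (k : ℝ) ^ j / (Nat.factorial k : ℝ)) * iteratedDeriv k Φ 0 *
            iteratedDeriv M (fun ζ => v ζ ^ k) 0 := by
  intro j M _
  have e : (fun ξ => iteratedDeriv M (fun ζ => Φ (c * Real.exp ξ * v ζ)) 0) =
      fun ξ => ∑ k ∈ Finset.Icc 1 M, (c ^ k / (Nat.factorial k : ℝ) * iteratedDeriv k Φ 0 *
            iteratedDeriv M (fun ζ => v ζ ^ k) 0) * Real.exp (k * ξ) := by
    funext ξ
    rw [aux_comp_s11 Φ v hΦ hv hΦ0 hv0]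
    refine Finset.sum_congr rfl fun k _ => ?_
    rw [mul_pow, ← Real.exp_nat_mul]
    ring
  rw [e, aux_sum j M _ (fun k ξ => Real.exp (k * ξ))
    (fun k => Real.contDiff_exp.comp (contDiff_const.mul contDiff_id))]
  refine Finset.sum_congr rfl fun k _ => ?_
  have : iteratedDeriv j (fun ξ : ℝ => Real.exp (k * ξ)) 0 = (k : ℝ) ^ j := by
    rw [iteratedDeriv_comp_const_mul Real.contDiff_exp]
    simp [iteratedDeriv_eq_iterate]
  rw [this]
  ring
end

section
/- Let N ≥ 2 be an integer and let H₀ ≥ 1 and H ≥ 2 be real numbers. Define the polynomial v(ζ) = H₀ ζ + Σ_{k=2}^{N} (H₀ H^{k−2}/(k−1)²) ζ^k. Then for all integers k, j with 1 ≤ k < j ≤ N, (1/j!) (d^j/dζ^j)(v(ζ)^k)|_{ζ=0} ≤ 6^{k−1} H₀^k H^{j−k−1} / (j−k)². -/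
theorem aux_sq2 (n : ℕ) : ∑ i ∈ Finset.range n, 1 / ((i : ℝ) + 1) ^ 2 ≤ 2 := by
  have key : ∀ m : ℕ, ∑ i ∈ Finset.range (m + 1), 1 / ((i : ℝ) + 1) ^ 2 ≤ 2 - 1 / ((m : ℝ) + 1) := by
    intro m
    induction m with
    | zero => norm_num
    | succ m ih =>
      rw [Finset.sum_range_succ]
      have h0 : (0 : ℝ) ≤ m := Nat.cast_nonneg m
      have h : 1 / ((m : ℝ) + 1 + 1) ^ 2 ≤ 1 / ((m : ℝ) + 1) - 1 / ((m : ℝ) + 1 + 1) := by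
        rw [div_sub_div _ _ (by positivity) (by positivity), div_le_div_iff₀ (by positivity) (by positivity)]
        nlinarith
      push_cast
      linarith
  cases n with
  | zero => norm_num
  | succ m =>
    have := key m
    have h0 : (0 : ℝ) ≤ 1 / ((m : ℝ) + 1) := by positivity
    linarith

theorem aux_conv (n : ℕ) :
    ∑ i ∈ Finset.range n, 1 / ((((i : ℝ) + 1) ^ 2) * ((n : ℝ) - i) ^ 2) ≤ 8 / ((n : ℝ) + 1) ^ 2 := by
  have h1 : ∀ i ∈ Finset.range n, 1 / ((((i : ℝ) + 1) ^ 2) * ((n : ℝ) - i) ^ 2) ≤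
      2 / ((n : ℝ) + 1) ^ 2 * (1 / ((i : ℝ) + 1) ^ 2 + 1 / ((n : ℝ) - i) ^ 2) := by
    intro i hi
    have hi' : (i : ℝ) < n := by exact_mod_cast Finset.mem_range.mp hi
    have ha : (0 : ℝ) < (i : ℝ) + 1 := by positivity
    have hb : (0 : ℝ) < (n : ℝ) - i := by linarith
    have hn : (n : ℝ) + 1 = ((i : ℝ) + 1) + ((n : ℝ) - i) := by ring
    rw [hn]
    generalize (i : ℝ) + 1 = a at *
    generalize (n : ℝ) - i = b at *
    have hs : 2 / (a + b) ^ 2 * (1 / a ^ 2 + 1 / b ^ 2) = (2 * (a ^ 2 + b ^ 2)) / ((a + b) ^ 2 * (a ^ 2 * b ^ 2)) := by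
      field_simp
      ring
    rw [hs, div_le_div_iff₀ (by positivity) (by positivity)]
    have : 0 ≤ (a ^ 2 * b ^ 2) * (a - b) ^ 2 := by positivity
    nlinarith
  refine (Finset.sum_le_sum h1).trans ?_
  rw [← Finset.mul_sum, Finset.sum_add_distrib]
  have h2 : ∑ i ∈ Finset.range n, 1 / ((n : ℝ) - i) ^ 2 = ∑ i ∈ Finset.range n, 1 / ((i : ℝ) + 1) ^ 2 := by
    rw [← Finset.sum_range_reflect]
    refine Finset.sum_congr rfl fun i hi => ?_
    have hi' := Finset.mem_range.mp hi
    have : n - 1 - i = n - (i + 1) := by omega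
    rw [this, Nat.cast_sub (by omega)]
    push_cast
    congr 2
    ring
  rw [h2]
  have h3 := aux_sq2 n
  calc _ ≤ 2 / ((n : ℝ) + 1) ^ 2 * (2 + 2) := by gcongr
    _ = _ := by ring

open Polynomial in
theorem aux_pow_s12 (H : ℝ) (hH : 2 ≤ H) (W : ℝ[X]) (h0 : W.coeff 0 = 1)
    (hpos : ∀ m, 0 ≤ W.coeff m)
    (hle : ∀ m : ℕ, W.coeff (m + 1) ≤ H ^ m / ((m : ℝ) + 1) ^ 2) (k : ℕ) :
    (W ^ (k + 1)).coeff 0 = 1 ∧ (∀ m, 0 ≤ (W ^ (k + 1)).coeff m) ∧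
    ∀ m : ℕ, (W ^ (k + 1)).coeff (m + 1) ≤ 6 ^ k * H ^ m / ((m : ℝ) + 1) ^ 2 := by
  induction k with
  | zero => simpa using ⟨h0, hpos, hle⟩
  | succ k ih =>
    obtain ⟨i0, ip, il⟩ := ih
    rw [pow_succ W (k + 1)]
    generalize W ^ (k + 1) = V at *
    refine ⟨by simp [mul_coeff_zero, i0, h0], fun m => ?_, fun n => ?_⟩
    · rw [coeff_mul]
      exact Finset.sum_nonneg fun x _ => mul_nonneg (ip _) (hpos _)
    · rw [coeff_mul, Finset.Nat.sum_antidiagonal_eq_sum_range_succ_mk, Finset.sum_range_succ,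
        Finset.sum_range_succ']
      simp only [Nat.sub_self, Nat.sub_zero, i0, h0, one_mul, mul_one]
      have hH0 : 0 < H := by linarith
      have hc : ∑ i ∈ Finset.range n, V.coeff (i + 1) * W.coeff (n + 1 - (i + 1)) ≤
          6 ^ k * (H ^ n / 2) * (8 / ((n : ℝ) + 1) ^ 2) := by
        refine le_trans ?_ (mul_le_mul_of_nonneg_left (aux_conv n) (by positivity))
        rw [Finset.mul_sum]
        refine Finset.sum_le_sum fun i hi => ?_
        obtain ⟨d, rfl⟩ := Nat.exists_eq_add_of_lt (Finset.mem_range.mp hi)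
        have e : i + d + 1 + 1 - (i + 1) = d + 1 := by omega
        rw [e]
        refine (mul_le_mul (il i) (hle d) (hpos _) (by positivity)).trans ?_
        have e2 : ((i + d + 1 : ℕ) : ℝ) - i = (d : ℝ) + 1 := by push_cast; ring
        rw [e2]
        have e3 : H ^ i * H ^ d ≤ H ^ (i + d + 1) / 2 := by
          rw [pow_succ, pow_add]
          have : 0 < H ^ i * H ^ d := by positivity
          nlinarith
        calc _ = 6 ^ k * (H ^ i * H ^ d) * (1 / (((i : ℝ) + 1) ^ 2 * ((d : ℝ) + 1) ^ 2)) := by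
              field_simp
          _ ≤ _ := by gcongr
      have h1 := il n
      have h2 := hle n
      have h6 : (1 : ℝ) ≤ 6 ^ k := one_le_pow₀ (by norm_num)
      have hq : 0 ≤ H ^ n / ((n : ℝ) + 1) ^ 2 := by positivity
      have a1 : 6 ^ k * H ^ n / ((n : ℝ) + 1) ^ 2 = 6 ^ k * (H ^ n / ((n : ℝ) + 1) ^ 2) := by ring
      have a2 : 6 ^ k * (H ^ n / 2) * (8 / ((n : ℝ) + 1) ^ 2) = 4 * (6 ^ k * (H ^ n / ((n : ℝ) + 1) ^ 2)) := by ring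
      have a3 : 6 ^ (k + 1) * H ^ n / ((n : ℝ) + 1) ^ 2 = 6 * (6 ^ k * (H ^ n / ((n : ℝ) + 1) ^ 2)) := by ring
      rw [a1] at h1
      rw [a2] at hc
      rw [a3]
      have := mul_le_mul_of_nonneg_right h6 hq
      linarith

open Polynomial in
theorem aux_deriv (P : ℝ[X]) (j : ℕ) :
    (1 / (Nat.factorial j : ℝ)) * iteratedDeriv j (fun x => P.eval x) 0 = P.coeff j := by
  have h : ∀ (j : ℕ) (P : ℝ[X]), iteratedDeriv j (fun x => P.eval x) = fun x => (derivative^[j] P).eval x := by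
    intro j
    induction j with
    | zero => intro P; simp
    | succ j ih =>
      intro P
      rw [iteratedDeriv_succ']
      have : deriv (fun x => P.eval x) = fun x => (derivative P).eval x := by
        ext x; simp
      rw [this, ih, Function.iterate_succ_apply]
  rw [h]
  simp only
  rw [← coeff_zero_eq_eval_zero, coeff_iterate_derivative]
  have : (Nat.factorial j : ℝ) ≠ 0 := by positivity
  simp [Nat.descFactorial_self]
  field_simp

open Polynomial in
/-- coefficient estimate for the powers of the majorant
`v(ζ) = H₀ζ + Σ_{k=2}^N (H₀ H^{k-2}/(k-1)²) ζ^k`. -/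
theorem stmt_12 (N : ℕ) (hN : 2 ≤ N) (H₀ H : ℝ) (hH₀ : 1 ≤ H₀) (hH : 2 ≤ H) :
    ∀ k j : ℕ, 1 ≤ k → k < j → j ≤ N →
      (1 / (Nat.factorial j : ℝ)) *
          iteratedDeriv j (fun ζ : ℝ =>
            (H₀ * ζ + ∑ i ∈ Finset.Icc 2 N,
              H₀ * H ^ (i - 2) / ((i : ℝ) - 1) ^ 2 * ζ ^ i) ^ k) 0 ≤
        6 ^ (k - 1) * H₀ ^ k * H ^ (j - k - 1) / ((j : ℝ) - (k : ℝ)) ^ 2 := by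
  intro k j hk hkj hjN
  obtain ⟨k, rfl⟩ : ∃ k', k = k' + 1 := ⟨k - 1, by omega⟩
  obtain ⟨m, rfl⟩ := Nat.exists_eq_add_of_lt hkj
  have hH0 : 0 < H := by linarith
  let W : ℝ[X] := 1 + ∑ i ∈ Finset.Icc 2 N, C (H ^ (i - 2) / ((i : ℝ) - 1) ^ 2) * X ^ (i - 1)
  have hf : (fun ζ : ℝ => (H₀ * ζ + ∑ i ∈ Finset.Icc 2 N,
              H₀ * H ^ (i - 2) / ((i : ℝ) - 1) ^ 2 * ζ ^ i) ^ (k + 1)) =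
      fun ζ => (C (H₀ ^ (k + 1)) * (W ^ (k + 1) * X ^ (k + 1))).eval ζ := by
    ext ζ
    simp only [eval_mul, eval_pow, eval_C, eval_X, ← mul_pow]
    congr 1
    simp only [W, eval_add, eval_one, eval_finset_sum, eval_mul, eval_C, eval_pow, eval_X]
    rw [add_mul, mul_add, one_mul, Finset.sum_mul, Finset.mul_sum]
    congr 1
    refine Finset.sum_congr rfl fun i hi => ?_
    obtain ⟨d, rfl⟩ : ∃ d, i = d + 2 := ⟨i - 2, by have := Finset.mem_Icc.mp hi; omega⟩
    have e1 : d + 2 - 1 = d + 1 := rfl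
    rw [e1]
    ring
  rw [hf, aux_deriv, coeff_C_mul]
  have e : k + 1 + m + 1 = (m + 1) + (k + 1) := by ring
  rw [e, coeff_mul_X_pow]
  have hc : ∀ n : ℕ, W.coeff (n + 1) = if n + 2 ≤ N then H ^ n / ((n : ℝ) + 1) ^ 2 else 0 := by
    intro n
    simp only [W, coeff_add, finset_sum_coeff, coeff_C_mul, coeff_X_pow, coeff_one]
    have : ∀ i ∈ Finset.Icc 2 N, (H ^ (i - 2) / ((i : ℝ) - 1) ^ 2 * if n + 1 = i - 1 then (1 : ℝ) else 0) =
        if n + 2 = i then H ^ n / ((n : ℝ) + 1) ^ 2 else 0 := by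
      intro i hi
      have := Finset.mem_Icc.mp hi
      by_cases h : n + 2 = i
      · subst h
        have e1 : n + 2 - 1 = n + 1 := rfl
        simp only [e1, if_true, Nat.add_sub_cancel]
        push_cast
        ring
      · have : ¬ (n + 1 = i - 1) := by omega
        simp [h, this]
    rw [Finset.sum_congr rfl this, Finset.sum_ite_eq]
    simp
  have h0 : W.coeff 0 = 1 := by
    simp only [W, coeff_add, finset_sum_coeff, coeff_C_mul, coeff_X_pow, coeff_one]
    rw [Finset.sum_eq_zero]
    · simp
    · intro i hi
      have := Finset.mem_Icc.mp hi
      rw [if_neg (by omega), mul_zero]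
  have hp : ∀ n, 0 ≤ W.coeff n := by
    intro n
    cases n with
    | zero => rw [h0]; norm_num
    | succ n => rw [hc]; split_ifs <;> positivity
  have hl : ∀ n : ℕ, W.coeff (n + 1) ≤ H ^ n / ((n : ℝ) + 1) ^ 2 := by
    intro n
    rw [hc]; split_ifs
    · exact le_rfl
    · positivity
  have main := (aux_pow_s12 H hH W h0 hp hl k).2.2 m
  have e1 : m + 1 + (k + 1) - (k + 1) - 1 = m := by omega
  have e2 : ((m + 1 + (k + 1) : ℕ) : ℝ) - ((k + 1 : ℕ) : ℝ) = (m : ℝ) + 1 := by push_cast; ring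
  rw [e1, e2, Nat.add_sub_cancel]
  calc _ ≤ H₀ ^ (k + 1) * (6 ^ k * H ^ m / ((m : ℝ) + 1) ^ 2) := by
        apply mul_le_mul_of_nonneg_left main; positivity
    _ = _ := by ring
end
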